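/- Let n ≥ 2, λ > 0, and g = 4π ∑_{j=1}^{k₁} m_j δ_{p_j}, h = 4π ∑_{j=1}^{k₂} n_j δ_{q_j} with m_j, n_j ∈ ℕ. If (u, v) is a topological solution of Δu = λ e^v (e^u − 1) + g, Δv = λ e^u (e^v − 1) + h on ℤⁿ, then the sums below converge and λ ∑_{x ∈ ℤⁿ} e^{v(x)} (1 − e^{u(x)}) = 4π ∑_{j=1}^{k₁} m_j and λ ∑_{x ∈ ℤⁿ} e^{u(x)} (1 − e^{v(x)}) = 4π ∑_{j=1}^{k₂} n_j. -/

import Mathlib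

/-!
Write `Δu = f + g` with `f = λ eᵛ (eᵘ - 1)`, which has the sign of `u`. The key point is the
Brezis–Strauss estimate `∑ |f| ≤ ∑ |g|`. By Kato's inequality `sign(u) Δu ≤ Δ|u|`, hence
`|f| - |g| ≤ Δ|u|`. As `u → 0`, the truncation `(|u| - ε)⁺` has finite support for each `ε > 0`, so
its Laplacian sums to zero; this Laplacian is nonnegative where `|u| ≤ ε` and at least `Δ|u|` where
`|u| > ε`. Hence the sum of `|f|` over `{|u| > ε}` is at most `∑ |g|`, and one lets `ε → 0`.

Since `f ∼ λ u` at infinity, `u` is summable too, so `∑ Δu = 0`, that is `∑ f = -∑ g`.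
-/

open Filter Real

noncomputable section

namespace CS

abbrev Lat (n : ℕ) := Fin n → ℤ

/-- d(x) = ∑ᵢ |xᵢ|, the graph distance to the origin on ℤⁿ. -/
def latDist {n : ℕ} (x : Lat n) : ℕ := ∑ i, (x i).natAbs

/-- x ~ y iff ∑ᵢ |xᵢ − yᵢ| = 1. -/
def adjacent {n : ℕ} (x y : Lat n) : Prop := (∑ i, (x i - y i).natAbs) = 1

instance {n : ℕ} (x y : Lat n) : Decidable (adjacent x y) :=
  decidable_of_iff ((∑ i, (x i - y i).natAbs) = 1) Iff.rfl

def unitVec {n : ℕ} (i : Fin n) : Lat n := fun j => if j = i then 1 else 0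

/-- The graph Laplacian Δu(x) = ∑_{y ~ x} (u(y) − u(x)) on ℤⁿ. -/
def lapl {n : ℕ} (u : Lat n → ℝ) (x : Lat n) : ℝ :=
  ∑ i, (u (x + unitVec i) + u (x - unitVec i) - 2 * u x)

/-- The filter of neighborhoods of infinity (d(x) → +∞) on ℤⁿ. -/
def atInfty (n : ℕ) : Filter (Lat n) := Filter.comap latDist Filter.atTop

/-- The Dirac mass at p. -/
def dirac {n : ℕ} (p x : Lat n) : ℝ := if x = p then 1 else 0

/-- (u,v) is a topological solution of Δu = λ eᵛ(eᵘ−1) + g, Δv = λ eᵘ(eᵛ−1) + h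
with u, v → 0 at infinity. -/
def IsTopSol {n : ℕ} (lam : ℝ) (g h u v : Lat n → ℝ) : Prop :=
  (∀ x, lapl u x = lam * Real.exp (v x) * (Real.exp (u x) - 1) + g x) ∧
  (∀ x, lapl v x = lam * Real.exp (u x) * (Real.exp (v x) - 1) + h x) ∧
  Filter.Tendsto u (atInfty n) (nhds 0) ∧
  Filter.Tendsto v (atInfty n) (nhds 0)

open scoped Asymptotics Topology

lemma natAbs_le_latDist {n : ℕ} (x : Lat n) (i : Fin n) : (x i).natAbs ≤ latDist x :=
  Finset.single_le_sum (f := fun i => (x i).natAbs) (fun _ _ => Nat.zero_le _) (Finset.mem_univ i)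

lemma tendsto_latDist_cofinite_atTop (n : ℕ) :
    Tendsto (latDist : Lat n → ℕ) cofinite atTop := by
  refine tendsto_atTop.2 fun N => eventually_cofinite.2 ?_
  refine (Set.finite_Icc (fun _ => -(N : ℤ)) (fun _ => (N : ℤ))).subset fun x hx => ?_
  have natAbs_lt (i) : (x i).natAbs < N := (natAbs_le_latDist x i).trans_lt (not_le.1 hx)
  exact ⟨fun i => by grind, fun i => by grind⟩

lemma cofinite_le_atInfty (n : ℕ) : cofinite ≤ atInfty n :=
  (tendsto_latDist_cofinite_atTop n).le_comap

section Laplacian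

variable {n : ℕ}

lemma lapl_neg (u : Lat n → ℝ) : lapl (-u) = -lapl u := by
  ext x
  simp only [lapl, Pi.neg_apply, ← Finset.sum_neg_distrib]
  exact Finset.sum_congr rfl fun i _ => by ring

lemma lapl_sub_const (u : Lat n → ℝ) (c : ℝ) : lapl (fun x => u x - c) = lapl u := by
  ext x
  exact Finset.sum_congr rfl fun i _ => by ring

lemma lapl_zero : lapl (0 : Lat n → ℝ) = 0 := by
  ext x
  simp [lapl]

lemma lapl_le_lapl_of_le_of_eq {a b : Lat n → ℝ} (hab : a ≤ b) {x : Lat n} (hx : a x = b x) :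
    lapl a x ≤ lapl b x := by
  refine Finset.sum_le_sum fun i _ => ?_
  linarith [hab (x + unitVec i), hab (x - unitVec i)]

lemma sign_mul_lapl_le_lapl_abs (u : Lat n → ℝ) (x : Lat n) :
    SignType.sign (u x) * lapl u x ≤ lapl |u| x := by
  rcases lt_trichotomy (u x) 0 with hx | hx | hx
  · have hle := lapl_le_lapl_of_le_of_eq (neg_le_abs u) (x := x) (abs_of_neg hx).symm
    simpa [hx, lapl_neg] using hle
  · have hle := lapl_le_lapl_of_le_of_eq (abs_nonneg u) (x := x) (by simp [hx])
    simpa [hx, lapl_zero] using hle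
  · have hle := lapl_le_lapl_of_le_of_eq (le_abs_self u) (x := x) (abs_of_pos hx).symm
    simpa [hx] using hle

lemma indicator_lapl_le_lapl_posPart (u : Lat n → ℝ) (x : Lat n) :
    {y | 0 < u y}.indicator (lapl u) x ≤ lapl u⁺ x := by
  by_cases hx : 0 < u x
  · have hle := lapl_le_lapl_of_le_of_eq (le_posPart u) (x := x) (posPart_of_nonneg hx.le).symm
    simpa [hx] using hle
  · have hle := lapl_le_lapl_of_le_of_eq (posPart_nonneg u) (x := x)
      (posPart_of_nonpos (not_lt.1 hx)).symm
    simpa [hx, lapl_zero] using hle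

lemma hasSum_lapl {u : Lat n → ℝ} (hu : Summable u) : HasSum (lapl u) 0 := by
  have hasSum_shift (t : Lat n) : HasSum (fun x => u (x + t)) (∑' x, u x) :=
    (Equiv.addRight t).hasSum_iff.2 hu.hasSum
  have hasSum_all := hasSum_sum (s := Finset.univ) fun (i : Fin n) _ =>
    ((hasSum_shift (unitVec i)).add (hasSum_shift (-unitVec i))).sub (hu.hasSum.mul_left 2)
  simp only [← two_mul, sub_self, Finset.sum_const_zero, ← sub_eq_add_neg] at hasSum_all
  exact hasSum_all

end Laplacian

section L1Estimate

variable {n : ℕ} {w f k : Lat n → ℝ}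

lemma sum_indicator_le_tsum_of_sub_le_lapl {ε : ℝ} (hfin : {x | ε < w x}.Finite)
    (hf : 0 ≤ f) (hk : 0 ≤ k) (hk_sum : Summable k)
    (hlapl : ∀ x, ε < w x → f x - k x ≤ lapl w x) (s : Finset (Lat n)) :
    ∑ x ∈ s, {x | ε < w x}.indicator f x ≤ ∑' x, k x := by
  set z : Lat n → ℝ := (fun x => w x - ε)⁺ with hz
  have support_finite : (Function.support z).Finite :=
    hfin.subset fun x hx => not_le.1 fun hle => hx (posPart_of_nonpos (sub_nonpos.2 hle))
  have hasSum_bound : HasSum (fun x => lapl z x + k x) (∑' x, k x) := by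
    simpa using (hasSum_lapl (summable_of_hasFiniteSupport support_finite)).add hk_sum.hasSum
  have indicator_le (x) : {x | ε < w x}.indicator f x ≤ lapl z x + k x := by
    have kato := indicator_lapl_le_lapl_posPart (fun x => w x - ε) x
    rw [lapl_sub_const, ← hz] at kato
    by_cases hx : ε < w x
    · simp only [Set.indicator, Set.mem_ofPred_eq, sub_pos, hx, if_true] at kato ⊢
      linarith [hlapl x hx]
    · simp only [Set.indicator, Set.mem_ofPred_eq, sub_pos, hx, if_false] at kato ⊢
      exact add_nonneg kato (hk x)
  calc ∑ x ∈ s, {x | ε < w x}.indicator f x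
      ≤ ∑ x ∈ s, (lapl z x + k x) := Finset.sum_le_sum fun x _ => indicator_le x
    _ ≤ ∑' x, k x := sum_le_hasSum s
        (fun x _ => (Set.indicator_nonneg (fun y _ => hf y) x).trans (indicator_le x)) hasSum_bound

lemma summable_of_sub_le_lapl (hw : Tendsto w cofinite (𝓝 0)) (hf : 0 ≤ f) (hk : 0 ≤ k)
    (hk_sum : Summable k) (hlapl : ∀ x, 0 < w x → f x - k x ≤ lapl w x)
    (hsupp : Function.support f ⊆ {x | 0 < w x}) : Summable f := by
  refine summable_of_sum_le hf (c := ∑' x, k x) fun s => ?_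
  have eventually_lt : ∀ᶠ ε in 𝓝[>] 0, ∀ x ∈ s, 0 < w x → ε < w x :=
    (Filter.eventually_all_finset s).2 fun x _ =>
      Filter.eventually_imp_distrib_left.2 fun hx => nhdsWithin_le_nhds (Iio_mem_nhds hx)
  obtain ⟨ε, hε_lt, hε : 0 < ε⟩ := (eventually_lt.and self_mem_nhdsWithin).exists
  have superlevel_finite : {x | ε < w x}.Finite :=
    (eventually_cofinite.1 (hw.eventually_lt_const hε)).subset fun _ hx => not_lt.2 (le_of_lt hx)
  calc ∑ x ∈ s, f x
      = ∑ x ∈ s, {x | ε < w x}.indicator f x := by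
        refine Finset.sum_congr rfl fun x hx => (Set.indicator_apply_eq_self.2 fun h => ?_).symm
        exact Function.notMem_support.1 fun hfx => h (hε_lt x hx (hsupp hfx))
    _ ≤ ∑' x, k x := sum_indicator_le_tsum_of_sub_le_lapl superlevel_finite hf hk hk_sum
        (fun x hx => hlapl x (hε.trans hx)) s

end L1Estimate

lemma neg_abs_le_signType_mul (s : SignType) (a : ℝ) : -|a| ≤ s * a := by
  cases s <;> simp [neg_abs_le, le_abs_self]

section SemilinearEquation

variable {n : ℕ} {u f g : Lat n → ℝ}

lemma summable_of_lapl_eq_add (hu : Tendsto u cofinite (𝓝 0)) (hg : Summable g)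
    (hsign : ∀ x, SignType.sign (f x) = SignType.sign (u x))
    (heq : ∀ x, lapl u x = f x + g x) : Summable f := by
  have sub_le_lapl (x) : |f x| - |g x| ≤ lapl |u| x :=
    calc |f x| - |g x|
        ≤ SignType.sign (u x) * f x + SignType.sign (u x) * g x := by
          rw [← hsign, sign_mul_self, sub_eq_add_neg]
          exact add_le_add_right (neg_abs_le_signType_mul _ _) _
      _ = SignType.sign (u x) * lapl u x := by rw [heq, mul_add]
      _ ≤ lapl |u| x := sign_mul_lapl_le_lapl_abs u x
  refine Summable.of_abs (summable_of_sub_le_lapl (w := |u|) ?_ (fun x => abs_nonneg (f x))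
    (fun x => abs_nonneg (g x)) hg.abs (fun x _ => sub_le_lapl x) fun x hx => ?_)
  · exact abs_zero (α := ℝ) ▸ hu.abs
  · have hfx : f x ≠ 0 := by simpa using hx
    rw [← sign_ne_zero, hsign, sign_ne_zero] at hfx
    exact abs_pos.2 hfx

lemma hasSum_of_lapl_eq_add {G : ℝ} (hu : Tendsto u cofinite (𝓝 0)) (hg : HasSum g G)
    (hsign : ∀ x, SignType.sign (f x) = SignType.sign (u x)) (hu_isBigO : u =O[cofinite] f)
    (heq : ∀ x, lapl u x = f x + g x) : HasSum f (-G) := by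
  have hf : Summable f := summable_of_lapl_eq_add hu hg.summable hsign heq
  have hasSum_sub := (hasSum_lapl (summable_of_isBigO' hf hu_isBigO)).sub hg
  simpa [heq] using hasSum_sub

end SemilinearEquation

lemma sign_exp_sub_one (t : ℝ) : SignType.sign (exp t - 1) = SignType.sign t := by
  rcases lt_trichotomy t 0 with h | rfl | h
  · rw [_root_.sign_neg h, _root_.sign_neg (sub_neg.2 (exp_lt_one_iff.2 h))]
  · simp
  · rw [sign_pos h, sign_pos (sub_pos.2 (one_lt_exp_iff.2 h))]

lemma isEquivalent_exp_sub_one : (fun t => exp t - 1) ~[𝓝 0] id :=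
  (hasDerivAt_exp 0).isLittleO.congr (by simp) (by simp)

lemma hasSum_exp_mul_one_sub_exp {n : ℕ} {lam G : ℝ} (hlam : 0 < lam) {u v g : Lat n → ℝ}
    (hu : Tendsto u cofinite (𝓝 0)) (hv : Tendsto v cofinite (𝓝 0)) (hg : HasSum g G)
    (heq : ∀ x, lapl u x = lam * exp (v x) * (exp (u x) - 1) + g x) :
    HasSum (fun x => exp (v x) * (1 - exp (u x))) (G / lam) := by
  have hsign (x) : SignType.sign (lam * exp (v x) * (exp (u x) - 1)) = SignType.sign (u x) := by
    rw [sign_mul, sign_pos (by positivity), one_mul, sign_exp_sub_one]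
  have coeff_equiv : (fun x => lam * exp (v x)) ~[cofinite] fun _ => lam := by
    refine (Asymptotics.isEquivalent_const_iff_tendsto hlam.ne').2 ?_
    simpa using ((continuous_exp.tendsto 0).comp hv).const_mul lam
  have hu_isBigO : u =O[cofinite] fun x => lam * exp (v x) * (exp (u x) - 1) :=
    (Asymptotics.isBigO_self_const_mul hlam.ne' u cofinite).trans
      (coeff_equiv.mul (isEquivalent_exp_sub_one.comp_tendsto hu)).isBigO_symm
  have h := (hasSum_of_lapl_eq_add hu hg hsign hu_isBigO heq).mul_left (-lam⁻¹)
  rw [neg_mul_neg, inv_mul_eq_div] at h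
  refine h.congr_fun fun x => ?_
  field_simp
  ring

lemma hasSum_sum_mul_dirac {n : ℕ} {ι : Type*} [Fintype ι] (c : ι → ℝ) (p : ι → Lat n) :
    HasSum (fun x => ∑ j, c j * dirac (p j) x) (∑ j, c j) := by
  refine hasSum_sum fun j _ => ?_
  have hasSum_dirac : HasSum (dirac (p j)) 1 := hasSum_ite_eq (p j) (1 : ℝ)
  simpa using hasSum_dirac.mul_left (c j)

theorem flux_identities_general {n : ℕ} {lam : ℝ} (hlam : 0 < lam) {g h u v : Lat n → ℝ} {G H : ℝ}
    (hg : HasSum g G) (hh : HasSum h H) (hsol : IsTopSol lam g h u v) :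
    Summable (fun x : Lat n => exp (v x) * (1 - exp (u x))) ∧
    Summable (fun x : Lat n => exp (u x) * (1 - exp (v x))) ∧
    lam * ∑' x : Lat n, exp (v x) * (1 - exp (u x)) = G ∧
    lam * ∑' x : Lat n, exp (u x) * (1 - exp (v x)) = H := by
  obtain ⟨hequ, heqv, hu, hv⟩ := hsol
  replace hu := hu.mono_left (cofinite_le_atInfty n)
  replace hv := hv.mono_left (cofinite_le_atInfty n)
  have hasSum_u := hasSum_exp_mul_one_sub_exp hlam hu hv hg hequ
  have hasSum_v := hasSum_exp_mul_one_sub_exp hlam hv hu hh heqv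
  refine ⟨hasSum_u.summable, hasSum_v.summable, ?_, ?_⟩
  · rw [hasSum_u.tsum_eq, mul_div_cancel₀ _ hlam.ne']
  · rw [hasSum_v.tsum_eq, mul_div_cancel₀ _ hlam.ne']

/-- for a topological solution (u,v), the sums
∑ₓ eᵛ(1 − eᵘ) and ∑ₓ eᵘ(1 − eᵛ) converge, with
λ ∑ₓ eᵛ(1 − eᵘ) = 4π ∑ⱼ mⱼ and λ ∑ₓ eᵘ(1 − eᵛ) = 4π ∑ⱼ nⱼ. -/
theorem flux_identities
    {n : ℕ} (hn : 2 ≤ n) (lam : ℝ) (hlam : 0 < lam)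
    {k₁ k₂ : ℕ} (m : Fin k₁ → ℕ) (nn : Fin k₂ → ℕ)
    (p : Fin k₁ → Lat n) (q : Fin k₂ → Lat n)
    (g h : Lat n → ℝ)
    (hg : g = fun x => 4 * Real.pi * ∑ j, (m j : ℝ) * dirac (p j) x)
    (hh : h = fun x => 4 * Real.pi * ∑ j, (nn j : ℝ) * dirac (q j) x)
    (u v : Lat n → ℝ) (hsol : IsTopSol lam g h u v) :
    Summable (fun x : Lat n => Real.exp (v x) * (1 - Real.exp (u x))) ∧
    Summable (fun x : Lat n => Real.exp (u x) * (1 - Real.exp (v x))) ∧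
    lam * ∑' x : Lat n, Real.exp (v x) * (1 - Real.exp (u x))
      = 4 * Real.pi * ∑ j, (m j : ℝ) ∧
    lam * ∑' x : Lat n, Real.exp (u x) * (1 - Real.exp (v x))
      = 4 * Real.pi * ∑ j, (nn j : ℝ) := by
  subst hg hh
  exact flux_identities_general hlam ((hasSum_sum_mul_dirac _ p).mul_left _)
    ((hasSum_sum_mul_dirac _ q).mul_left _) hsol

end CS
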